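/- Let n ≥ 1 and let α, β ∈ ℂ with q = α·β ≠ 0; set p = α + β and let u be the (p,q)-recursive sequence with u_0 = 0, u_1 = 1. Suppose u_1, u_2, …, u_{n+1} are all nonzero. Then in ℂ[x] one has Σ_{i=0}^{n+1} (−1)^i · q^{i(i−1)/2} · (n+1 | i)_u · x^{(n+1)−i} = ∏_{j=0}^{n} (x − α^j·β^{n−j}). -/

import Mathlib

/-!
Scaling every root by a parameter `c` makes the factorization amenable to induction on the
degree `N`: among the roots `c * α ^ j * β ^ (N - j)`, `j ≤ N`, those with `j < N` are the roots
of the degree `N` problem with parameter `c * β`, and the remaining one is `c * α ^ N`.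
Comparing coefficients, the induction step (`prod_scaled_roots`) is the Pascal-type rule
`(N+1 | i+1) = β ^ (i+1) (N | i+1) + α ^ (N-i) (N | i)` (`genBinom_pascal`), which in turn is the
addition formula `u (a + b) = β ^ b u a + α ^ a u b` (`rec_add`) after clearing denominators.
The result is the case `c = 1`, `N = n + 1`.
-/

open Finset Polynomial

/-- The generalized binomial coefficient `(N | i)_u`. It is meaningful when `u 1, …, u i` are
nonzero, and when `u 0 = 0` it then vanishes for `i = N + 1`. -/
noncomputable def genBinom (u : ℤ → ℂ) (N i : ℕ) : ℂ :=
  (∏ j ∈ range i, u ((N : ℤ) - j)) / (∏ j ∈ range i, u (j + 1))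

/-- The addition formula for `b = 1`: the sequence `u (a + 1) - β * u a` is geometric of
ratio `α`. -/
lemma rec_succ {α β : ℂ} {u : ℤ → ℂ}
    (hu : ∀ m : ℤ, u m = (α + β) * u (m - 1) - (α * β) * u (m - 2))
    (hu0 : u 0 = 0) (hu1 : u 1 = 1) (a : ℕ) :
    u ((a : ℤ) + 1) = β * u a + α ^ a := by
  induction a with
  | zero => simp [hu0, hu1]
  | succ a ih =>
    have h := hu ((a : ℤ) + 1 + 1)
    rw [show (a : ℤ) + 1 + 1 - 1 = a + 1 by ring, show (a : ℤ) + 1 + 1 - 2 = a by ring] at h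
    push_cast
    rw [h, pow_succ]
    linear_combination α * ih

lemma rec_add {α β : ℂ} {u : ℤ → ℂ}
    (hu : ∀ m : ℤ, u m = (α + β) * u (m - 1) - (α * β) * u (m - 2))
    (hu0 : u 0 = 0) (hu1 : u 1 = 1) (a b : ℕ) :
    u ((a : ℤ) + b) = β ^ b * u a + α ^ a * u b := by
  induction b with
  | zero => simp [hu0]
  | succ b ih =>
    have h1 := rec_succ hu hu0 hu1 (a + b)
    have h2 := rec_succ hu hu0 hu1 b
    push_cast at h1 ⊢
    rw [← add_assoc, h1, h2, ih]
    ring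

lemma genBinom_pascal {α β : ℂ} {u : ℤ → ℂ}
    (hu : ∀ m : ℤ, u m = (α + β) * u (m - 1) - (α * β) * u (m - 2))
    (hu0 : u 0 = 0) (hu1 : u 1 = 1) {N i : ℕ} (hi : i ≤ N) (hne : u ((i : ℤ) + 1) ≠ 0) :
    genBinom u (N + 1) (i + 1) =
      β ^ (i + 1) * genBinom u N (i + 1) + α ^ (N - i) * genBinom u N i := by
  obtain ⟨k, rfl⟩ := Nat.exists_eq_add_of_le hi
  have hadd := rec_add hu hu0 hu1 k (i + 1)
  -- the numerator of `(N+1 | i+1)` is `u (N+1)` times that of `(N | i)`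
  have hnum : ∏ j ∈ range (i + 1), u (((i + k + 1 : ℕ) : ℤ) - j) =
      (∏ j ∈ range i, u (((i + k : ℕ) : ℤ) - j)) * u ((k : ℤ) + (i + 1 : ℕ)) := by
    rw [prod_range_succ']
    congr 1
    · refine prod_congr rfl fun j _ => ?_
      congr 1; push_cast; ring
    · congr 1; push_cast; ring
  have hk : ((i + k : ℕ) : ℤ) - i = k := by push_cast; ring
  unfold genBinom
  rw [hnum, prod_range_succ, prod_range_succ, hk, Nat.add_sub_cancel_left, hadd]
  push_cast
  generalize (∏ j ∈ range i, u ((i : ℤ) + k - j)) = F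
  -- the common factor `∏ j < i, u (j + 1)` needs no nonvanishing: it is kept as an inverse
  rw [div_eq_mul_inv, div_eq_mul_inv, div_eq_mul_inv, mul_inv]
  field_simp

/-- The factorization with all roots scaled by `c`; the scaling parameter is what makes the
induction on `N` go through. -/
lemma prod_scaled_roots {α β : ℂ} {u : ℤ → ℂ}
    (hu : ∀ m : ℤ, u m = (α + β) * u (m - 1) - (α * β) * u (m - 2))
    (hu0 : u 0 = 0) (hu1 : u 1 = 1) (N : ℕ)
    (hnz : ∀ i : ℕ, i < N → u ((i : ℤ) + 1) ≠ 0) (c : ℂ) :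
    ∑ i ∈ range (N + 1), C ((-1 : ℂ) ^ i * (α * β) ^ (i * (i - 1) / 2) * genBinom u N i * c ^ i) *
        X ^ (N - i) =
      ∏ j ∈ range N, (X - C (c * (α ^ j * β ^ (N - 1 - j)))) := by
  induction N generalizing c with
  | zero => simp [genBinom]
  | succ N ih =>
    have hprod : ∏ j ∈ range N, (X - C (c * (α ^ j * β ^ (N + 1 - 1 - j)))) =
        ∏ j ∈ range N, (X - C (c * β * (α ^ j * β ^ (N - 1 - j)))) := by
      refine prod_congr rfl fun j hj => ?_
      have hj := mem_range.mp hj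
      rw [show N + 1 - 1 - j = N - 1 - j + 1 by omega, pow_succ]
      congr 2; ring
    have hlast : c * (α ^ N * β ^ (N + 1 - 1 - N)) = c * α ^ N := by simp
    rw [prod_range_succ, hprod, hlast, ← ih (fun i hi => hnz i (by omega)) (c * β)]
    set a : ℕ → ℂ := fun i =>
      (-1 : ℂ) ^ i * (α * β) ^ (i * (i - 1) / 2) * genBinom u N i * (c * β) ^ i with ha
    -- `(N | N+1) = 0`, so the sum times `X` may be extended by one vanishing term
    have htop : a (N + 1) = 0 := by
      simp [ha, genBinom, prod_range_succ, hu0]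
    have hX : (∑ i ∈ range (N + 1), C (a i) * X ^ (N - i)) * X =
        ∑ i ∈ range (N + 2), C (a i) * X ^ (N + 1 - i) := by
      rw [sum_range_succ _ (N + 1), htop, sum_mul]
      simp only [map_zero, zero_mul, add_zero]
      refine sum_congr rfl fun i hi => ?_
      have hi := mem_range.mp hi
      rw [show N + 1 - i = N - i + 1 by omega, pow_succ, mul_assoc]
    change _ = (∑ i ∈ range (N + 1), C (a i) * X ^ (N - i)) * (X - C (c * α ^ N))
    rw [mul_sub, hX, sum_range_succ' _ (N + 1), sum_range_succ' _ (N + 1), sum_mul,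
      add_sub_right_comm, ← sum_sub_distrib]
    congr 1
    refine sum_congr rfl fun i hi => ?_
    have hi : i ≤ N := Nat.lt_succ_iff.mp (mem_range.mp hi)
    have htri : (i + 1) * (i + 1 - 1) / 2 = i * (i - 1) / 2 + i := by
      rw [← sum_range_id_mul_two, ← sum_range_id_mul_two]
      simp [sum_range_succ]
    have hpow : α ^ N = α ^ (N - i) * α ^ i := by rw [← pow_add]; congr 1; omega
    have hcoef : (-1 : ℂ) ^ (i + 1) * (α * β) ^ ((i + 1) * (i + 1 - 1) / 2) *
        genBinom u (N + 1) (i + 1) * c ^ (i + 1) = a (i + 1) - a i * (c * α ^ N) := by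
      simp only [ha]
      rw [genBinom_pascal hu hu0 hu1 hi (hnz i (by omega)), htri, hpow]
      ring
    rw [hcoef, show N + 1 - (i + 1) = N - i by omega]
    rw [C_sub, C_mul (a := a i)]
    ring

/-- eq. (4.6), Lemma 3.3 of Cooper–Kennedy: with `p = α + β`,
`q = α·β ≠ 0` and `u` the fundamental `(p,q)`-recursive solution, if
`u_1, …, u_{n+1}` are all nonzero, then
`Σ_{i=0}^{n+1} (−1)^i q^{i(i−1)/2} (n+1 | i)_u x^{n+1−i} = ∏_{j=0}^{n} (x − α^j β^{n−j})`. -/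
theorem recurrence_poly_factorization (n : ℕ) (hn : 1 ≤ n) (α β : ℂ)
    (hq : α * β ≠ 0) (u : ℤ → ℂ)
    (hu : ∀ m : ℤ, u m = (α + β) * u (m - 1) - (α * β) * u (m - 2))
    (hu0 : u 0 = 0) (hu1 : u 1 = 1)
    (hnz : ∀ k : ℕ, 1 ≤ k → k ≤ n + 1 → u k ≠ 0) :
    ∑ i ∈ range (n + 2),
      Polynomial.C ((-1 : ℂ) ^ i * (α * β) ^ (i * (i - 1) / 2) *
        ((∏ j ∈ range i, u ((n : ℤ) + 1 - j)) / (∏ j ∈ range i, u (j + 1)))) *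
        Polynomial.X ^ (n + 1 - i) =
    ∏ j ∈ range (n + 1), (Polynomial.X - Polynomial.C (α ^ j * β ^ (n - j))) := by
  have h := prod_scaled_roots hu hu0 hu1 (n + 1)
    (fun i hi => by exact_mod_cast hnz (i + 1) (by omega) (by omega)) 1
  simpa only [genBinom, one_pow, mul_one, one_mul, Nat.add_sub_cancel, Nat.cast_add,
    Nat.cast_one] using h
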